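/- Let E be a finitely complete and cocomplete category equipped with a functorial cylinder I⊗(−) having a right adjoint. Let I be a class of maps, Cof = llp(rlp(I)), I_⊗ = { δᵏ ⊗̂ i : i ∈ I, k ∈ {0,1} }, and Fib = rlp(I_⊗). Assume that for every object X the unique map 0 → X from the initial object lies in Cof. Then for k ∈ {0,1}, the pullback of a strong k-oriented homotopy equivalence along a map in Fib is again a strong k-oriented homotopy equivalence: given a pullback square with right-hand vertical map g : B → Y a strong k-oriented homotopy equivalence and bottom map p : X → Y in Fib, the left-hand vertical map ḡ : A → X is a strong k-oriented homotopy equivalence. -/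

import Mathlib

/-!
Statement 8 (Lemma `thm:non-alg-frobenius-she`): the pullback of a strong `k`-oriented
homotopy equivalence along a fibration is a strong `k`-oriented homotopy equivalence.
-/

open CategoryTheory Category Limits

universe v u

namespace GS

variable {E : Type u} [Category.{v} E]

def rlp (J : MorphismProperty E) : MorphismProperty E :=
  fun _ _ p => ∀ ⦃A B : E⦄ (i : A ⟶ B), J i → HasLiftingProperty i p

def llp (J : MorphismProperty E) : MorphismProperty E :=
  fun _ _ i => ∀ ⦃X Y : E⦄ (p : X ⟶ Y), J p → HasLiftingProperty i p

structure Cylinder (E : Type u) [Category.{v} E] where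
  I : E ⥤ E
  δ : Fin 2 → (𝟭 E ⟶ I)

variable (Q : Cylinder E)

noncomputable def Cylinder.leibniz [HasPushouts E] (k : Fin 2) {A B : E} (i : A ⟶ B) :
    pushout ((Q.δ k).app A) i ⟶ Q.I.obj B :=
  pushout.desc (Q.I.map i) ((Q.δ k).app B) (by simpa using ((Q.δ k).naturality i).symm)

def IsStrongHEquivWith (k : Fin 2) {X Y : E} (f : X ⟶ Y)
    (g : Y ⟶ X) (φ : Q.I.obj X ⟶ X) (ψ : Q.I.obj Y ⟶ Y) : Prop :=
  (Q.δ k).app X ≫ φ = f ≫ g ∧ (Q.δ (1 - k)).app X ≫ φ = 𝟙 X ∧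
  (Q.δ k).app Y ≫ ψ = g ≫ f ∧ (Q.δ (1 - k)).app Y ≫ ψ = 𝟙 Y ∧
  φ ≫ f = Q.I.map f ≫ ψ

def IsStrongHEquiv (k : Fin 2) {X Y : E} (f : X ⟶ Y) : Prop :=
  ∃ g φ ψ, IsStrongHEquivWith Q k f g φ ψ

def fib [HasPushouts E] (I : MorphismProperty E) : MorphismProperty E :=
  fun _ _ p => ∀ ⦃A B : E⦄ (i : A ⟶ B), I i → ∀ k : Fin 2,
    HasLiftingProperty (Q.leibniz k i) p

/-- Evaluation at an endpoint, from the right adjoint of the cylinder. -/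
def ev {Exp : E ⥤ E} (adj : Q.I ⊣ Exp) (j : Fin 2) (Z : E) : Exp.obj Z ⟶ Z :=
  (Q.δ j).app (Exp.obj Z) ≫ adj.counit.app Z

lemma comp_ev {Exp : E ⥤ E} (adj : Q.I ⊣ Exp) (j : Fin 2) {W Z : E} (t : W ⟶ Exp.obj Z) :
    t ≫ ev Q adj j Z = (Q.δ j).app W ≫ (adj.homEquiv W Z).symm t := by
  have h := (Q.δ j).naturality t
  simp only [Functor.id_map] at h
  rw [ev, reassoc_of% h, Adjunction.homEquiv_counit]

lemma ev_nat {Exp : E ⥤ E} (adj : Q.I ⊣ Exp) (j : Fin 2) {X Y : E} (p : X ⟶ Y) :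
    ev Q adj j X ≫ p = Exp.map p ≫ ev Q adj j Y := by
  rw [comp_ev, Adjunction.homEquiv_counit, Adjunction.counit_naturality, ev, assoc]

lemma gap_rlp [HasFiniteLimits E] [HasFiniteColimits E] {Exp : E ⥤ E} (adj : Q.I ⊣ Exp)
    (I : MorphismProperty E) (j : Fin 2) {X Y : E} (p : X ⟶ Y) (hp : fib Q I p) :
    rlp I (pullback.lift (f := p) (g := ev Q adj j Y) (ev Q adj j X) (Exp.map p)
      (ev_nat Q adj j p)) := by
  intro A B i hi
  refine ⟨fun {u w} sq => ?_⟩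
  have h1 : u ≫ ev Q adj j X = i ≫ w ≫ pullback.fst _ _ := by
    have := sq.w =≫ pullback.fst _ _
    rwa [assoc, assoc, pullback.lift_fst] at this
  have h2 : u ≫ Exp.map p = i ≫ w ≫ pullback.snd _ _ := by
    have := sq.w =≫ pullback.snd _ _
    rwa [assoc, assoc, pullback.lift_snd] at this
  have h3 : (w ≫ pullback.fst _ _) ≫ p = (w ≫ pullback.snd _ _) ≫ ev Q adj j Y := by
    simp [pullback.condition]
  have := hp i hi j
  have sq' : CommSq
      (pushout.desc ((adj.homEquiv A X).symm u) (w ≫ pullback.fst _ _)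
        ((comp_ev Q adj j u).symm.trans h1))
      (Q.leibniz j i) p ((adj.homEquiv B Y).symm (w ≫ pullback.snd _ _)) := by
    refine ⟨?_⟩
    apply pushout.hom_ext
    · rw [Cylinder.leibniz, pushout.inl_desc_assoc, pushout.inl_desc_assoc,
        ← Adjunction.homEquiv_naturality_right_symm,
        ← Adjunction.homEquiv_naturality_left_symm, h2]
    · rw [Cylinder.leibniz, pushout.inr_desc_assoc, pushout.inr_desc_assoc, h3, comp_ev]
  obtain ⟨l, f1, f2⟩ : ∃ l, Q.leibniz j i ≫ l = _ ∧ l ≫ p = _ :=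
    ⟨sq'.lift, sq'.fac_left, sq'.fac_right⟩
  have a1 := pushout.inl _ _ ≫= f1
  have a2 := pushout.inr _ _ ≫= f1
  rw [Cylinder.leibniz, pushout.inl_desc_assoc, pushout.inl_desc] at a1
  rw [Cylinder.leibniz, pushout.inr_desc_assoc, pushout.inr_desc] at a2
  refine ⟨⟨⟨adj.homEquiv B X l, ?_, ?_⟩⟩⟩
  · rw [← Adjunction.homEquiv_naturality_left, a1, Equiv.apply_symm_apply]
  · apply pullback.hom_ext
    · rw [assoc, pullback.lift_fst, comp_ev, Equiv.symm_apply_apply, a2]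
    · rw [assoc, pullback.lift_snd, ← Adjunction.homEquiv_naturality_right, f2,
        Equiv.apply_symm_apply]

lemma lift_homotopy [HasFiniteLimits E] [HasFiniteColimits E] {Exp : E ⥤ E} (adj : Q.I ⊣ Exp)
    (I : MorphismProperty E) (hS2 : ∀ X : E, llp (rlp I) (initial.to X))
    (j : Fin 2) {X Y W : E} (p : X ⟶ Y) (hp : fib Q I p)
    (a : W ⟶ X) (b : Q.I.obj W ⟶ Y) (hab : a ≫ p = (Q.δ j).app W ≫ b) :
    ∃ l : Q.I.obj W ⟶ X, (Q.δ j).app W ≫ l = a ∧ l ≫ p = b := by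
  have := hS2 W _ (gap_rlp Q adj I j p hp)
  have sq : CommSq (initial.to (Exp.obj X)) (initial.to W)
      (pullback.lift (f := p) (g := ev Q adj j Y) (ev Q adj j X) (Exp.map p)
        (ev_nat Q adj j p))
      (pullback.lift a (adj.homEquiv W Y b)
        (by rw [comp_ev, Equiv.symm_apply_apply, hab])) := ⟨initial.hom_ext _ _⟩
  have f := sq.fac_right
  have a1 := f =≫ pullback.fst _ _
  have a2 := f =≫ pullback.snd _ _
  rw [assoc, pullback.lift_fst, pullback.lift_fst, comp_ev] at a1
  rw [assoc, pullback.lift_snd, pullback.lift_snd] at a2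
  refine ⟨_, a1, ?_⟩
  rw [← Adjunction.homEquiv_naturality_right_symm, a2, Equiv.symm_apply_apply]

theorem pullback_of_strongHEquiv_along_fib
    [HasFiniteLimits E] [HasFiniteColimits E]
    (Exp : E ⥤ E) (adj : Q.I ⊣ Exp)
    (I : MorphismProperty E)
    -- every object is cofibrant: every map from the initial object is a cofibration
    (hS2 : ∀ X : E, llp (rlp I) (initial.to X))
    (k : Fin 2) {A B X Y : E}
    (q : A ⟶ B) (gbar : A ⟶ X) (g : B ⟶ Y) (p : X ⟶ Y)
    (hpb : IsPullback q gbar g p)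
    (hg : IsStrongHEquiv Q k g) (hp : fib Q I p) :
    IsStrongHEquiv Q k gbar := by
  obtain ⟨h, φ, ψ, h1, h2, h3, h4, h5⟩ := hg
  have nat : ∀ (j : Fin 2) {U V : E} (f : U ⟶ V),
      (Q.δ j).app U ≫ Q.I.map f = f ≫ (Q.δ j).app V := fun j U V f => by
    simpa using ((Q.δ j).naturality f).symm
  obtain ⟨ψ', l1, l2⟩ := lift_homotopy Q adj I hS2 (1 - k) p hp (𝟙 X) (Q.I.map p ≫ ψ) (by
    rw [reassoc_of% (nat (1 - k) p), h4]; simp)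
  have w := hpb.w
  refine ⟨hpb.lift (p ≫ h) ((Q.δ k).app X ≫ ψ') ?_,
    hpb.lift (Q.I.map q ≫ φ) (Q.I.map gbar ≫ ψ') ?_, ψ', ?_, ?_, ?_, l1, ?_⟩
  · rw [assoc, assoc, l2, reassoc_of% (nat k p), h3]
  · rw [assoc, assoc, l2, h5, ← Functor.map_comp_assoc, w, Functor.map_comp_assoc]
  · apply hpb.hom_ext
    · rw [assoc, assoc gbar, hpb.lift_fst, hpb.lift_fst, reassoc_of% (nat k q), h1, reassoc_of% w]
    · rw [assoc, assoc gbar, hpb.lift_snd, hpb.lift_snd, reassoc_of% (nat k gbar)]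
  · apply hpb.hom_ext
    · rw [assoc, hpb.lift_fst, reassoc_of% (nat (1 - k) q), h2]; simp
    · rw [assoc, hpb.lift_snd, reassoc_of% (nat (1 - k) gbar), l1]; simp
  · rw [hpb.lift_snd]
  · rw [hpb.lift_snd]

end GS
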